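/- Let L and S be positive integers with S ≤ L, let γ ∈ (0,1) be the positive root of Lγ + Sγ² = 1, and let (ξ^j)_{j≥1} be the (L,S)-sequence of points. Then (ξ^j)_{j≥1} is uniformly distributed in [0,1): for all real numbers a, b with 0 ≤ a < b ≤ 1, one has lim_{N→∞} (1/N) Σ_{j=1}^{N} χ_{[a,b)}(ξ^j) = b − a. -/

import Mathlib

open Finset Real

noncomputable section

/-- The `k`-th digit of `n` in base `b`. -/
def lsDigit (b n k : ℕ) : ℕ := n / b ^ k % b

/-- Membership in the set `N_{L,S}`: for every `k`, the pair of consecutive digits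
`(a_k(n), a_{k+1}(n))` in base `L+S` does not lie in
`{L,…,L+S−1} × {1,…,L+S−1}`. -/
def memNLS (L S n : ℕ) : Prop :=
  ∀ k : ℕ, ¬ (L ≤ lsDigit (L + S) n k ∧ lsDigit (L + S) n k ≤ L + S - 1 ∧
      1 ≤ lsDigit (L + S) n (k + 1) ∧ lsDigit (L + S) n (k + 1) ≤ L + S - 1)

/-- The modified digit `ã`: `ã = a` if `a ≤ L−1`, and `ã = L + γ(a−L)` if `L ≤ a`. -/
def lsTilde (L : ℕ) (γ : ℝ) (a : ℕ) : ℝ :=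
  if a < L then (a : ℝ) else (L : ℝ) + γ * ((a : ℝ) - (L : ℝ))

/-- The radical-inverse-type function `φ_{L,S}(n) = Σ_{k=0}^{M} ã_k(n) γ^{k+1}`,
with `M = ⌊log_{L+S} n⌋`. -/
def lsPhi (L S : ℕ) (γ : ℝ) (n : ℕ) : ℝ :=
  ∑ k ∈ Finset.range (Nat.log (L + S) n + 1),
    lsTilde L γ (lsDigit (L + S) n k) * γ ^ (k + 1)

/-- The `(L,S)`-sequence of points: `ξ^j = φ_{L,S}(n_j)` where `n_1 < n_2 < ⋯`
is the increasing enumeration of `N_{L,S}` (so `n_j = Nat.nth (memNLS L S) (j-1)`). -/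
def lsSeq (L S : ℕ) (γ : ℝ) (j : ℕ) : ℝ :=
  lsPhi L S γ (Nat.nth (memNLS L S) (j - 1))

/-- One-dimensional discrepancy of the first `N` terms `x 1, …, x N` of a sequence:
`sup_{0 ≤ a < b ≤ 1} |(1/N) Σ_{j=1}^N χ_{[a,b)}(x j) − (b−a)|`. -/
def discrep (x : ℕ → ℝ) (N : ℕ) : ℝ :=
  ⨆ p : {p : ℝ × ℝ // 0 ≤ p.1 ∧ p.1 < p.2 ∧ p.2 ≤ 1},
    |(∑ j ∈ Finset.Icc 1 N,
        Set.indicator (Set.Ico p.1.1 p.1.2) (fun _ => (1 : ℝ)) (x j)) / N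
      - (p.1.2 - p.1.1)|

/-- Two-dimensional (star) discrepancy of the first `N` terms of a sequence of points
in the unit square:
`sup_{0 < a ≤ 1, 0 < b ≤ 1} |(1/N) Σ_{j=1}^N χ_{[0,a)×[0,b)}(x j) − ab|`. -/
def discrep2 (x : ℕ → ℝ × ℝ) (N : ℕ) : ℝ :=
  ⨆ p : {p : ℝ × ℝ // 0 < p.1 ∧ p.1 ≤ 1 ∧ 0 < p.2 ∧ p.2 ≤ 1},
    |(∑ j ∈ Finset.Icc 1 N,
        Set.indicator (Set.Ico (0 : ℝ) p.1.1) (fun _ => (1 : ℝ)) (x j).1 *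
        Set.indicator (Set.Ico (0 : ℝ) p.1.2) (fun _ => (1 : ℝ)) (x j).2) / N
      - p.1.1 * p.1.2|

/-!
The restriction of `φ` to `N_{L,S}` satisfies `φ(d + bm) = γ(d + φ(m))` for a digit `d < L` and
`φ(L + e + b²q) = γL + γ²(e + φ(q))` for a digit `L + e`, which must be followed by a zero. Hence
the counts `A(X) = #(N_{L,S} ∩ [0, X))` and `A_x(X) = #{n ∈ N_{L,S} ∩ [0, X) : φ(n) < x}` satisfy
`A(X) = L A(X/b) + S A(X/b²) + O(1)` and analogous relations for `A_x`. The first forces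
`A(X/b) / A(X) → γ`. The others then say that the limiting error of `A_x(X) / A(X)` as an
approximation of `x` is `γ` or `γ²` times the limiting error at another point of `[0, 1]`, so it
vanishes. Finally, the first `N` points of the sequence are those counted by `A(X)` for `X` the
`N`-th element of `N_{L,S}`.
-/

open Filter Topology

section Limits

variable {α : Type*} {l : Filter α}

lemma eventually_norm_lt_of_norm_le_mul_comp {ι E : Type*} [Norm E] {f : ι → α → E} {B c : ℝ}
    (hc0 : 0 ≤ c) (hc1 : c < 1) (hB : ∀ i a, ‖f i a‖ ≤ B)
    (hf : ∀ i, ∃ j, ∃ g : α → α, ∃ e : α → ℝ, Tendsto g l l ∧ Tendsto e l (𝓝 0) ∧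
      ∀ a, ‖f i a‖ ≤ c * ‖f j (g a)‖ + e a) (k : ℕ) :
    ∀ i, ∀ δ > c ^ k * B, ∀ᶠ a in l, ‖f i a‖ < δ := by
  induction k with
  | zero =>
    intro i δ hδ
    exact .of_forall fun a => (hB i a).trans_lt (by simpa using hδ)
  | succ k ih =>
    intro i δ hδ
    obtain ⟨j, g, e, hg, he, hfe⟩ := hf i
    obtain ⟨η, hη, rfl⟩ : ∃ η > 0, δ = c ^ (k + 1) * B + 2 * η :=
      ⟨(δ - c ^ (k + 1) * B) / 2, by linarith, by ring⟩
    filter_upwards [hg.eventually (ih j (c ^ k * B + η) (by linarith)),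
      he.eventually_lt_const hη] with a hfa hea
    calc ‖f i a‖ ≤ c * ‖f j (g a)‖ + e a := hfe a
      _ < c * (c ^ k * B + η) + η :=
        add_lt_add_of_le_of_lt (mul_le_mul_of_nonneg_left hfa.le hc0) hea
      _ = c ^ (k + 1) * B + (c * η + η) := by ring
      _ ≤ c ^ (k + 1) * B + 2 * η := by nlinarith

lemma tendsto_zero_of_norm_le_mul_comp {ι E : Type*} [SeminormedAddGroup E] {f : ι → α → E}
    {B c : ℝ} (hc0 : 0 ≤ c) (hc1 : c < 1) (hB : ∀ i a, ‖f i a‖ ≤ B)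
    (hf : ∀ i, ∃ j, ∃ g : α → α, ∃ e : α → ℝ, Tendsto g l l ∧ Tendsto e l (𝓝 0) ∧
      ∀ a, ‖f i a‖ ≤ c * ‖f j (g a)‖ + e a) (i : ι) :
    Tendsto (f i) l (𝓝 0) := by
  refine NormedAddGroup.tendsto_nhds_zero.2 fun δ hδ => ?_
  have hpow : Tendsto (fun k : ℕ => c ^ k * B) atTop (𝓝 0) := by
    simpa using (tendsto_pow_atTop_nhds_zero_of_lt_one hc0 hc1).mul_const B
  obtain ⟨k, hk⟩ := (hpow.eventually_lt_const hδ).exists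
  exact eventually_norm_lt_of_norm_le_mul_comp hc0 hc1 hB hf k i δ hk

-- A single step of the recursion need not contract the distance to `γ`; two steps do, by the
-- factor `q / (p + q)`.
lemma abs_sub_root_le_of_mul_add {p q γ r₀ r₁ r₂ : ℝ} (hp : 0 < p) (hq : 0 ≤ q) (hγ : 0 < γ)
    (hroot : p * γ + q * γ ^ 2 = 1) (h₀ : r₀ ∈ Set.Icc 0 1) (h₁ : r₁ ∈ Set.Icc 0 1)
    (h₂ : r₂ ∈ Set.Icc 0 1) :
    |r₀ - γ| ≤ q / (p + q) * |r₂ - γ| +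
      ((1 + 2 * γ) * |r₀ * (p + q * r₁) - 1| + |r₁ * (p + q * r₂) - 1|) := by
  set e₀ := r₀ * (p + q * r₁) - 1 with he₀
  set e₁ := r₁ * (p + q * r₂) - 1 with he₁
  obtain ⟨h₀, h₀'⟩ := h₀
  obtain ⟨h₁, h₁'⟩ := h₁
  obtain ⟨h₂, h₂'⟩ := h₂
  have hqγ : q * γ ^ 2 ≤ 1 := by nlinarith
  have hprod : r₀ * r₁ ≤ (1 + |e₀|) / (p + q) := by
    rw [le_div_iff₀ (by positivity)]
    nlinarith [le_abs_self e₀, mul_nonneg (mul_nonneg hp.le h₀) (sub_nonneg.2 h₁')]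
  have hcoef : q * γ ^ 2 * (q * (r₀ * r₁)) ≤ q / (p + q) * (1 + |e₀|) :=
    calc q * γ ^ 2 * (q * (r₀ * r₁)) ≤ 1 * (q * ((1 + |e₀|) / (p + q))) := by gcongr
      _ = q / (p + q) * (1 + |e₀|) := by ring
  have hdist : |r₂ - γ| ≤ 1 + γ := abs_le.2 ⟨by linarith, by linarith⟩
  have hratio : q / (p + q) ≤ 1 := div_le_one_of_le₀ (by linarith) (by positivity)
  have hexpand : r₀ - γ =
      q * γ ^ 2 * (q * (r₀ * r₁)) * (r₂ - γ) + γ * e₀ - q * γ ^ 2 * r₀ * e₁ := by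
    rw [he₀, he₁]
    linear_combination (r₀ * (q * γ * r₁ - 1)) * hroot
  calc |r₀ - γ|
      ≤ q * γ ^ 2 * (q * (r₀ * r₁)) * |r₂ - γ| + γ * |e₀| + q * γ ^ 2 * r₀ * |e₁| := by
        rw [hexpand]
        refine (abs_sub _ _).trans (add_le_add ((abs_add_le _ _).trans_eq ?_) (le_of_eq ?_))
        · rw [abs_mul, abs_mul γ, abs_of_pos hγ, abs_of_nonneg (by positivity)]
        · rw [abs_mul, abs_of_nonneg (by positivity)]
    _ ≤ q / (p + q) * (1 + |e₀|) * |r₂ - γ| + γ * |e₀| + 1 * |e₁| := by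
        gcongr
        exact mul_le_one₀ hqγ h₀ h₀'
    _ = q / (p + q) * |r₂ - γ| + (q / (p + q) * (|e₀| * |r₂ - γ|) + γ * |e₀| + |e₁|) := by ring
    _ ≤ q / (p + q) * |r₂ - γ| + (1 * (|e₀| * (1 + γ)) + γ * |e₀| + |e₁|) := by gcongr
    _ = _ := by ring

lemma tendsto_root_of_tendsto_mul_add_comp {p q γ : ℝ} {r : α → ℝ} {g : α → α} (hp : 0 < p)
    (hq : 0 ≤ q) (hγ : 0 < γ) (hroot : p * γ + q * γ ^ 2 = 1) (hr : ∀ a, r a ∈ Set.Icc 0 1)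
    (hg : Tendsto g l l) (h : Tendsto (fun a => r a * (p + q * r (g a))) l (𝓝 1)) :
    Tendsto r l (𝓝 γ) := by
  set e : α → ℝ := fun a => |r a * (p + q * r (g a)) - 1|
  have he : Tendsto e l (𝓝 0) := by simpa using (h.sub_const 1).abs
  have herror : Tendsto (fun a => (1 + 2 * γ) * e a + e (g a)) l (𝓝 0) := by
    simpa using (he.const_mul (1 + 2 * γ)).add (he.comp hg)
  have hdist : ∀ a, |r a - γ| ≤ 1 + γ := fun a =>
    abs_le.2 ⟨by linarith [(hr a).1], by linarith [(hr a).2]⟩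
  have hlim : Tendsto (fun a => r a - γ) l (𝓝 0) :=
    tendsto_zero_of_norm_le_mul_comp (f := fun _ : Unit => fun a => r a - γ)
      (div_nonneg hq (by positivity)) ((div_lt_one (by positivity)).2 (by linarith))
      (fun _ => hdist)
      (fun i => ⟨i, g ∘ g, _, hg.comp hg, herror, fun a =>
        abs_sub_root_le_of_mul_add hp hq hγ hroot (hr a) (hr (g a)) (hr (g (g a)))⟩) ()
  simpa using hlim.add_const γ

end Limits

section Translates

variable {M : Type*} [AddCommMonoid M] {f : ℝ → M} {C : M}

lemma sum_translates_of_le (hC : ∀ x, 1 ≤ x → f x = C) {n : ℕ} {x : ℝ} (hx : n ≤ x) :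
    ∑ i ∈ range n, f (x - i) = n • C := by
  refine (sum_congr rfl fun i hi => hC _ ?_).trans (by simp)
  have hin : (i : ℝ) + 1 ≤ n := by exact_mod_cast mem_range.1 hi
  linarith

lemma sum_translates_of_nonpos (h0 : ∀ x ≤ 0, f x = 0) (n : ℕ) {x : ℝ} (hx : x ≤ 0) :
    ∑ i ∈ range n, f (x - i) = 0 :=
  sum_eq_zero fun i _ => h0 _ (by linarith [Nat.cast_nonneg (α := ℝ) i])

lemma sum_translates_nat_add (h0 : ∀ x ≤ 0, f x = 0) (hC : ∀ x, 1 ≤ x → f x = C) {n d : ℕ}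
    (hd : d < n) {t : ℝ} (ht : t ∈ Set.Icc 0 1) :
    ∑ i ∈ range n, f (d + t - i) = d • C + f t := by
  obtain ⟨k, rfl⟩ := Nat.exists_eq_add_of_lt hd
  have htail : ∑ i ∈ range k, f (d + t - ((d + 1 + i : ℕ) : ℝ)) = 0 := by
    rw [← sum_translates_of_nonpos h0 k (sub_nonpos.2 ht.2)]
    exact sum_congr rfl fun i _ => congrArg f (by push_cast; ring)
  rw [add_right_comm, sum_range_add, htail, add_zero, sum_range_succ,
    sum_translates_of_le hC (by linarith [ht.1]), add_sub_cancel_left]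

end Translates

lemma exists_nat_add_of_mem_Icc {n : ℕ} (hn : 0 < n) {x : ℝ} (hx : x ∈ Set.Icc (0 : ℝ) n) :
    ∃ d < n, ∃ t ∈ Set.Icc (0 : ℝ) 1, x = d + t := by
  rcases hx.2.eq_or_lt with rfl | hlt
  · exact ⟨n - 1, by omega, 1, by simp, by simp [Nat.cast_pred hn]⟩
  · exact ⟨⌊x⌋₊, (Nat.floor_lt hx.1).2 hlt, x - ⌊x⌋₊,
      ⟨sub_nonneg.2 (Nat.floor_le hx.1), by linarith [Nat.lt_floor_add_one x]⟩, by ring⟩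

section Counting

lemma count_congr {p q : ℕ → Prop} [DecidablePred p] [DecidablePred q] (h : ∀ n, p n ↔ q n)
    (X : ℕ) : Nat.count p X = Nat.count q X :=
  le_antisymm (Nat.count_mono_left fun n _ => (h n).1) (Nat.count_mono_left fun n _ => (h n).2)

variable (p : ℕ → Prop) [DecidablePred p]

lemma count_mul_eq_sum_count (b Z : ℕ) :
    Nat.count p (b * Z) = ∑ d ∈ range b, Nat.count (fun m => p (d + b * m)) Z := by
  induction Z with
  | zero => simp
  | succ Z ih =>
    simp only [mul_add_one, Nat.count_add, ih, Nat.count_succ, sum_add_distrib]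
    rw [Nat.count_eq_card_filter_range, card_filter]
    simp only [add_comm (b * Z)]

lemma abs_count_sub_sum_count_div_le {b : ℕ} (hb : 0 < b) (X : ℕ) :
    |(Nat.count p X : ℝ) - ∑ d ∈ range b, (Nat.count (fun m => p (d + b * m)) (X / b) : ℝ)| ≤
      b := by
  have hsplit : Nat.count p X = ∑ d ∈ range b, Nat.count (fun m => p (d + b * m)) (X / b) +
      Nat.count (fun k => p (b * (X / b) + k)) (X % b) := by
    rw [← count_mul_eq_sum_count, ← Nat.count_add, Nat.div_add_mod]
  have hrest : Nat.count (fun k => p (b * (X / b) + k)) (X % b) ≤ b :=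
    (Nat.count_le _).trans (Nat.mod_lt X hb).le
  rw [hsplit]
  push_cast
  rw [add_sub_cancel_left, Nat.abs_cast]
  exact_mod_cast hrest

lemma abs_count_sub_count_div_le {b : ℕ} (hb : 0 < b) (hp : ∀ n, p n → b ∣ n) (X : ℕ) :
    |(Nat.count p X : ℝ) - Nat.count (fun m => p (b * m)) (X / b)| ≤ b := by
  convert abs_count_sub_sum_count_div_le p hb X
  rw [sum_eq_single_of_mem 0 (mem_range.2 hb)]
  · simp
  · intro d hd hd0
    refine Nat.cast_eq_zero.2 (Nat.count_iff_forall_not.2 fun m _ hm => hd0 ?_)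
    exact Nat.eq_zero_of_dvd_of_lt ((Nat.dvd_add_left (dvd_mul_right b m)).1 (hp _ hm))
      (mem_range.1 hd)

lemma count_and_nth {p : ℕ → Prop} [DecidablePred p] (hp : (Set.ofPred p).Infinite)
    (q : ℕ → Prop) [DecidablePred q] (N : ℕ) :
    Nat.count (fun n => p n ∧ q n) (Nat.nth p N) = Nat.count (fun i => q (Nat.nth p i)) N := by
  induction N with
  | zero =>
    rw [Nat.count_zero, Nat.count_iff_forall_not]
    exact fun n hn hpq => Nat.count_iff_forall_not.1 (Nat.count_nth_zero p) n hn hpq.1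
  | succ N ih =>
    rw [Nat.count_succ, ← ih, Nat.count_eq_card_filter_range, Nat.count_eq_card_filter_range,
      ← filter_filter, Nat.filter_range_nth_eq_insert_of_infinite hp, filter_insert, filter_filter]
    split_ifs with hq
    · rw [card_insert_of_notMem (by simp)]
    · rfl

end Counting

section Digits

variable {b d : ℕ}

lemma lsDigit_eq_zero_of_lt (hd : d < b) (k : ℕ) : lsDigit b d (k + 1) = 0 := by
  have hlt : d < b ^ (k + 1) := hd.trans_le (Nat.le_self_pow k.succ_ne_zero b)
  simp [lsDigit, Nat.div_eq_of_lt hlt]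

lemma lsDigit_zero_right (b n : ℕ) : lsDigit b n 0 = n % b := by
  simp [lsDigit]

lemma lsDigit_add_mul_zero (hd : d < b) (m : ℕ) : lsDigit b (d + b * m) 0 = d := by
  simp [lsDigit, Nat.mod_eq_of_lt hd]

lemma lsDigit_add_mul_succ (hd : d < b) (m k : ℕ) :
    lsDigit b (d + b * m) (k + 1) = lsDigit b m k := by
  rw [lsDigit, lsDigit, pow_succ', ← Nat.div_div_eq_div_mul,
    Nat.add_mul_div_left _ _ (Nat.zero_lt_of_lt hd), Nat.div_eq_of_lt hd, zero_add]

end Digits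

section Admissible

variable {L S : ℕ}

lemma memNLS_add_mul {d : ℕ} (hd : d < L + S) (m : ℕ) :
    memNLS L S (d + (L + S) * m) ↔ memNLS L S m ∧ (d < L ∨ L + S ∣ m) := by
  have hfirst : (d < L ∨ L + S ∣ m) ↔ ¬ (L ≤ d ∧ d ≤ L + S - 1 ∧
      1 ≤ m % (L + S) ∧ m % (L + S) ≤ L + S - 1) := by
    have := Nat.mod_lt m (Nat.zero_lt_of_lt hd)
    rw [Nat.dvd_iff_mod_eq_zero]
    omega
  rw [hfirst, memNLS, ← Nat.and_forall_add_one, and_comm]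
  simp only [lsDigit_add_mul_succ hd, lsDigit_add_mul_zero hd, lsDigit_zero_right, memNLS]

lemma memNLS_add_mul_of_lt {d : ℕ} (hd : d < L) (m : ℕ) :
    memNLS L S (d + (L + S) * m) ↔ memNLS L S m := by
  rw [memNLS_add_mul (by omega)]
  simp [hd]

lemma memNLS_base_mul (hL : 0 < L) (m : ℕ) : memNLS L S ((L + S) * m) ↔ memNLS L S m := by
  simpa using memNLS_add_mul_of_lt (S := S) hL m

lemma memNLS_add_add_mul {e : ℕ} (he : e < S) (m : ℕ) :
    memNLS L S (L + e + (L + S) * m) ↔ memNLS L S m ∧ L + S ∣ m := by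
  rw [memNLS_add_mul (by omega)]
  simp

lemma memNLS_of_lt {n : ℕ} (hn : n < L + S) : memNLS L S n := fun k h => by
  simp [lsDigit_eq_zero_of_lt hn k] at h

lemma memNLS_cases {n : ℕ} (hL : 0 < L) (hb : 1 < L + S) (hn : memNLS L S n) (hn0 : n ≠ 0) :
    (∃ d < L, ∃ m < n, memNLS L S m ∧ n = d + (L + S) * m) ∨
      ∃ e < S, ∃ q < n, memNLS L S q ∧ n = L + e + (L + S) * ((L + S) * q) := by
  have hlt : n / (L + S) < n := Nat.div_lt_self (Nat.pos_of_ne_zero hn0) hb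
  have hd : n % (L + S) < L + S := Nat.mod_lt n (by omega)
  have hdecomp : n = n % (L + S) + (L + S) * (n / (L + S)) := (Nat.mod_add_div n _).symm
  rw [hdecomp, memNLS_add_mul hd] at hn
  by_cases hdL : n % (L + S) < L
  · exact .inl ⟨_, hdL, _, hlt, hn.1, hdecomp⟩
  · obtain ⟨q, hq⟩ := hn.2.resolve_left hdL
    have hqn : q < n := (Nat.le_mul_of_pos_left q (by omega)).trans_lt (hq ▸ hlt)
    have hmem : memNLS L S q := (memNLS_base_mul hL q).1 (hq ▸ hn.1)
    exact .inr ⟨n % (L + S) - L, by omega, q, hqn, hmem, by rw [← hq]; omega⟩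

lemma infinite_memNLS (hL : 0 < L) (hb : 1 < L + S) : (Set.ofPred (memNLS L S)).Infinite := by
  have hpow : ∀ k, memNLS L S ((L + S) ^ k) := fun k => by
    induction k with
    | zero => exact memNLS_of_lt hb
    | succ k ih => rwa [pow_succ', memNLS_base_mul hL]
  exact Set.infinite_of_forall_exists_gt fun n => ⟨(L + S) ^ n, hpow n, Nat.lt_pow_self hb⟩

end Admissible

section RadicalInverse

variable {L S : ℕ} {γ : ℝ}

lemma lsTilde_nonneg (L : ℕ) (hγ : 0 ≤ γ) (d : ℕ) : 0 ≤ lsTilde L γ d := by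
  unfold lsTilde
  split_ifs with h
  · positivity
  · have hLd : (L : ℝ) ≤ d := by exact_mod_cast not_lt.1 h
    have := mul_nonneg hγ (sub_nonneg.2 hLd)
    positivity

lemma lsPhi_nonneg (L S : ℕ) (hγ : 0 ≤ γ) (n : ℕ) : 0 ≤ lsPhi L S γ n :=
  sum_nonneg fun _ _ => mul_nonneg (lsTilde_nonneg L hγ _) (by positivity)

lemma lsPhi_zero (hL : 0 < L) (S : ℕ) (γ : ℝ) : lsPhi L S γ 0 = 0 := by
  simp [lsPhi, lsDigit, lsTilde, hL]

lemma lsPhi_add_mul (hL : 0 < L) (hb : 1 < L + S) {d : ℕ} (hd : d < L + S) (γ : ℝ) (m : ℕ) :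
    lsPhi L S γ (d + (L + S) * m) = γ * (lsTilde L γ d + lsPhi L S γ m) := by
  rcases Nat.eq_zero_or_pos m with rfl | hm
  · simp [lsPhi, lsDigit, lsTilde, hL, Nat.log_of_lt hd, Nat.mod_eq_of_lt hd, mul_comm γ]
  · have hlog : Nat.log (L + S) (d + (L + S) * m) = Nat.log (L + S) m + 1 := by
      rw [Nat.log_of_one_lt_of_le hb (le_add_left (Nat.le_mul_of_pos_right _ hm)),
        Nat.add_mul_div_left _ _ (by omega), Nat.div_eq_of_lt hd, zero_add]
    rw [lsPhi, hlog, sum_range_succ', add_comm, lsDigit_add_mul_zero hd, mul_add, lsPhi, mul_sum]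
    congr 1
    · ring
    · refine sum_congr rfl fun k _ => ?_
      rw [lsDigit_add_mul_succ hd]
      ring

lemma lsPhi_add_mul_of_lt (hb : 1 < L + S) {d : ℕ} (hd : d < L) (γ : ℝ) (m : ℕ) :
    lsPhi L S γ (d + (L + S) * m) = γ * (d + lsPhi L S γ m) := by
  rw [lsPhi_add_mul (by omega) hb (by omega), lsTilde, if_pos hd]

lemma lsPhi_add_add_mul_mul (hL : 0 < L) {e : ℕ} (he : e < S) (γ : ℝ) (q : ℕ) :
    lsPhi L S γ (L + e + (L + S) * ((L + S) * q)) = L * γ + γ ^ 2 * (e + lsPhi L S γ q) := by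
  have hbase : lsPhi L S γ ((L + S) * q) = γ * lsPhi L S γ q := by
    simpa using lsPhi_add_mul_of_lt (S := S) (by omega) hL γ q
  rw [lsPhi_add_mul hL (by omega) (by omega), hbase, lsTilde, if_neg (by omega)]
  push_cast
  ring

lemma lsPhi_lt_one (hL : 0 < L) (hb : 1 < L + S) (hγ : 0 < γ)
    (hroot : (L : ℝ) * γ + (S : ℝ) * γ ^ 2 = 1) {n : ℕ} (hn : memNLS L S n) :
    lsPhi L S γ n < 1 := by
  induction n using Nat.strong_induction_on with
  | _ n ih =>
  rcases eq_or_ne n 0 with rfl | hn0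
  · simp [lsPhi_zero hL]
  rcases memNLS_cases hL hb hn hn0 with ⟨d, hd, m, hm, hmem, rfl⟩ | ⟨e, he, q, hq, hmem, rfl⟩
  · have hdL : (d : ℝ) + 1 ≤ L := by exact_mod_cast hd
    calc lsPhi L S γ (d + (L + S) * m) = γ * (d + lsPhi L S γ m) := lsPhi_add_mul_of_lt hb hd γ m
      _ < γ * (d + 1) := by gcongr; exact ih m hm hmem
      _ ≤ L * γ := by rw [mul_comm]; gcongr
      _ ≤ 1 := by rw [← hroot]; exact le_add_of_nonneg_right (by positivity)
  · have heS : (e : ℝ) + 1 ≤ S := by exact_mod_cast he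
    calc lsPhi L S γ (L + e + (L + S) * ((L + S) * q)) = L * γ + γ ^ 2 * (e + lsPhi L S γ q) :=
          lsPhi_add_add_mul_mul hL he γ q
      _ < L * γ + γ ^ 2 * (e + 1) := by gcongr; exact ih q hq hmem
      _ ≤ L * γ + S * γ ^ 2 := by rw [mul_comm (γ ^ 2)]; gcongr
      _ = 1 := hroot

end RadicalInverse

open Classical in
/-- The counting function `A(X) = #(N_{L,S} ∩ [0, X))`. -/
def lsCount (L S X : ℕ) : ℕ :=
  Nat.count (memNLS L S) X

open Classical in
/-- The counting function `A_x(X) = #{n ∈ N_{L,S} ∩ [0, X) : φ_{L,S}(n) < x}`. -/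
def lsCountLT (L S : ℕ) (γ x : ℝ) (X : ℕ) : ℕ :=
  Nat.count (fun n => memNLS L S n ∧ lsPhi L S γ n < x) X

/-- The empirical distribution function of `φ_{L,S}` on `N_{L,S} ∩ [0, X)`, evaluated at `x`. The
sample is cut off by the size of `n` rather than by its rank in `N_{L,S}`, because the digit
recursion acts on the former; the value at `X = 0` is `0 / 0 = 0`. -/
def lsCDF (L S : ℕ) (γ x : ℝ) (X : ℕ) : ℝ :=
  lsCountLT L S γ x X / lsCount L S X

section CountingFunctions

variable {L S : ℕ} {γ : ℝ}

lemma lsCount_mono (L S : ℕ) : Monotone (lsCount L S) := by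
  classical
  exact Nat.count_monotone _

lemma lsCount_pos {X : ℕ} (hb : 0 < L + S) (hX : 0 < X) : 0 < lsCount L S X := by
  classical
  exact Nat.pos_of_ne_zero (Nat.count_ne_iff_exists.2 ⟨0, hX, memNLS_of_lt hb⟩)

lemma lsCount_nth (hL : 0 < L) (hb : 1 < L + S) (N : ℕ) :
    lsCount L S (Nat.nth (memNLS L S) N) = N := by
  classical
  exact Nat.count_nth_of_infinite (infinite_memNLS hL hb) N

lemma tendsto_lsCount_atTop (hL : 0 < L) (hb : 1 < L + S) :
    Tendsto (fun X => (lsCount L S X : ℝ)) atTop atTop :=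
  tendsto_natCast_atTop_atTop.comp
    (tendsto_atTop_atTop_of_monotone (lsCount_mono L S) fun N => ⟨_, (lsCount_nth hL hb N).ge⟩)

lemma lsCountLT_le_lsCount (L S : ℕ) (γ x : ℝ) (X : ℕ) : lsCountLT L S γ x X ≤ lsCount L S X := by
  classical
  exact Nat.count_mono_left fun _ _ => And.left

lemma lsCountLT_of_nonpos (hγ : 0 ≤ γ) {x : ℝ} (hx : x ≤ 0) (X : ℕ) : lsCountLT L S γ x X = 0 := by
  classical
  exact Nat.count_iff_forall_not.2 fun n _ hn => (hn.2.trans_le hx).not_ge (lsPhi_nonneg L S hγ n)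

lemma lsCountLT_of_one_le (hL : 0 < L) (hb : 1 < L + S) (hγ : 0 < γ)
    (hroot : (L : ℝ) * γ + (S : ℝ) * γ ^ 2 = 1) {x : ℝ} (hx : 1 ≤ x) (X : ℕ) :
    lsCountLT L S γ x X = lsCount L S X := by
  classical
  exact count_congr (fun n => and_iff_left_of_imp fun hn =>
    (lsPhi_lt_one hL hb hγ hroot hn).trans_le hx) X

lemma count_add_mul_of_lt (hb : 1 < L + S) (hγ : 0 < γ) {d : ℕ} (hd : d < L) (x : ℝ) (X : ℕ)
    [DecidablePred fun m =>
      memNLS L S (d + (L + S) * m) ∧ lsPhi L S γ (d + (L + S) * m) < x] :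
    Nat.count (fun m => memNLS L S (d + (L + S) * m) ∧ lsPhi L S γ (d + (L + S) * m) < x) X =
      lsCountLT L S γ (x / γ - d) X := by
  classical
  refine count_congr (fun m => ?_) X
  rw [memNLS_add_mul_of_lt hd, lsPhi_add_mul_of_lt hb hd, lt_sub_iff_add_lt', lt_div_iff₀' hγ]

lemma abs_count_add_add_mul_sub_le (hL : 0 < L) (hγ : 0 < γ) {e : ℕ} (he : e < S) (x : ℝ) (X : ℕ)
    [DecidablePred fun m =>
      memNLS L S (L + e + (L + S) * m) ∧ lsPhi L S γ (L + e + (L + S) * m) < x] :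
    |(Nat.count (fun m => memNLS L S (L + e + (L + S) * m) ∧
        lsPhi L S γ (L + e + (L + S) * m) < x) X : ℝ) -
      lsCountLT L S γ ((x - L * γ) / γ ^ 2 - e) (X / (L + S))| ≤ L + S := by
  have hdvd : ∀ m, memNLS L S (L + e + (L + S) * m) ∧ lsPhi L S γ (L + e + (L + S) * m) < x →
      L + S ∣ m := fun m hm => ((memNLS_add_add_mul he m).1 hm.1).2
  have hquot : Nat.count (fun q => memNLS L S (L + e + (L + S) * ((L + S) * q)) ∧
      lsPhi L S γ (L + e + (L + S) * ((L + S) * q)) < x) (X / (L + S)) =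
      lsCountLT L S γ ((x - L * γ) / γ ^ 2 - e) (X / (L + S)) := by
    classical
    refine count_congr (fun q => ?_) _
    rw [memNLS_add_add_mul he, memNLS_base_mul hL, and_iff_left (dvd_mul_right _ q),
      lsPhi_add_add_mul_mul hL he, lt_sub_iff_add_lt', lt_div_iff₀' (pow_pos hγ 2),
      lt_sub_iff_add_lt']
  rw [← hquot, ← Nat.cast_add]
  exact abs_count_sub_count_div_le _ (by omega) hdvd X

lemma abs_lsCountLT_sub_sum_le (hL : 0 < L) (hb : 1 < L + S) (hγ : 0 < γ) (x : ℝ) (X : ℕ) :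
    |(lsCountLT L S γ x X : ℝ) -
      (∑ d ∈ range L, (lsCountLT L S γ (x / γ - d) (X / (L + S)) : ℝ) +
        ∑ e ∈ range S,
          (lsCountLT L S γ ((x - L * γ) / γ ^ 2 - e) (X / (L + S) / (L + S)) : ℝ))| ≤
      (L + S) + S * (L + S) := by
  classical
  have hdigits := abs_count_sub_sum_count_div_le
    (fun n => memNLS L S n ∧ lsPhi L S γ n < x) (b := L + S) (by omega) X
  rw [sum_range_add, sum_congr rfl fun d hd => congrArg Nat.cast
    (count_add_mul_of_lt hb hγ (mem_range.1 hd) x (X / (L + S)))] at hdigits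
  have hlarge : |∑ e ∈ range S,
      ((Nat.count (fun m => memNLS L S (L + e + (L + S) * m) ∧
          lsPhi L S γ (L + e + (L + S) * m) < x) (X / (L + S)) : ℝ) -
        lsCountLT L S γ ((x - L * γ) / γ ^ 2 - e) (X / (L + S) / (L + S)))| ≤
      ∑ _e ∈ range S, ((L : ℝ) + S) :=
    (abs_sum_le_sum_abs _ _).trans (sum_le_sum fun e he =>
      abs_count_add_add_mul_sub_le hL hγ (mem_range.1 he) x (X / (L + S)))
  rw [sum_sub_distrib, sum_const, card_range, nsmul_eq_mul] at hlarge
  push_cast at hdigits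
  refine (congrArg abs ?_).trans_le ((abs_add_le _ _).trans (add_le_add hdigits hlarge))
  rw [lsCountLT]
  ring

lemma abs_lsCountLT_sub_le_of_lt (hL : 0 < L) (hb : 1 < L + S) (hγ : 0 < γ)
    (hroot : (L : ℝ) * γ + (S : ℝ) * γ ^ 2 = 1) {d : ℕ} (hd : d < L) {t : ℝ}
    (ht : t ∈ Set.Icc 0 1) (X : ℕ) :
    |(lsCountLT L S γ (γ * (d + t)) X : ℝ) -
      (d * lsCount L S (X / (L + S)) + lsCountLT L S γ t (X / (L + S)))| ≤
      (L + S) + S * (L + S) := by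
  have hdL : (d : ℝ) + 1 ≤ L := by exact_mod_cast hd
  have hle : γ * (d + t) ≤ L * γ := by nlinarith [ht.2]
  convert abs_lsCountLT_sub_sum_le hL hb hγ (γ * (d + t)) X using 3
  rw [mul_div_cancel_left₀ _ hγ.ne',
    sum_translates_nat_add (f := fun y => (lsCountLT L S γ y (X / (L + S)) : ℝ))
      (fun y hy => by rw [lsCountLT_of_nonpos hγ.le hy, Nat.cast_zero])
      (fun y hy => by rw [lsCountLT_of_one_le hL hb hγ hroot hy]) hd ht,
    sum_translates_of_nonpos
      (f := fun y => (lsCountLT L S γ y (X / (L + S) / (L + S)) : ℝ))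
      (fun y hy => by rw [lsCountLT_of_nonpos hγ.le hy, Nat.cast_zero]) S
      (div_nonpos_of_nonpos_of_nonneg (sub_nonpos.2 hle) (sq_nonneg γ)),
    add_zero, nsmul_eq_mul]

lemma abs_lsCountLT_sub_le_add (hL : 0 < L) (hb : 1 < L + S) (hγ : 0 < γ)
    (hroot : (L : ℝ) * γ + (S : ℝ) * γ ^ 2 = 1) {e : ℕ} (he : e < S) {t : ℝ}
    (ht : t ∈ Set.Icc 0 1) (X : ℕ) :
    |(lsCountLT L S γ (L * γ + γ ^ 2 * (e + t)) X : ℝ) -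
      (L * lsCount L S (X / (L + S)) + (e * lsCount L S (X / (L + S) / (L + S)) +
        lsCountLT L S γ t (X / (L + S) / (L + S))))| ≤
      (L + S) + S * (L + S) := by
  have het : 0 ≤ γ ^ 2 * (e + t) :=
    mul_nonneg (sq_nonneg γ) (add_nonneg e.cast_nonneg ht.1)
  convert abs_lsCountLT_sub_sum_le hL hb hγ (L * γ + γ ^ 2 * (e + t)) X using 3
  rw [add_sub_cancel_left, mul_div_cancel_left₀ _ (pow_pos hγ 2).ne',
    sum_translates_nat_add (f := fun y => (lsCountLT L S γ y (X / (L + S) / (L + S)) : ℝ))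
      (fun y hy => by rw [lsCountLT_of_nonpos hγ.le hy, Nat.cast_zero])
      (fun y hy => by rw [lsCountLT_of_one_le hL hb hγ hroot hy]) he ht,
    sum_translates_of_le (f := fun y => (lsCountLT L S γ y (X / (L + S)) : ℝ))
      (fun y hy => by rw [lsCountLT_of_one_le hL hb hγ hroot hy])
      ((le_div_iff₀ hγ).2 (le_add_of_nonneg_right het)),
    nsmul_eq_mul, nsmul_eq_mul]

lemma abs_lsCount_sub_le (hL : 0 < L) (hb : 1 < L + S) (hγ : 0 < γ)
    (hroot : (L : ℝ) * γ + (S : ℝ) * γ ^ 2 = 1) (X : ℕ) :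
    |(lsCount L S X : ℝ) -
      (L * lsCount L S (X / (L + S)) + S * lsCount L S (X / (L + S) / (L + S)))| ≤
      (L + S) + S * (L + S) := by
  have hLγ : (L : ℝ) ≤ 1 / γ :=
    (le_div_iff₀ hγ).2 (hroot ▸ le_add_of_nonneg_right (by positivity))
  have hSγ : (S : ℝ) ≤ (1 - L * γ) / γ ^ 2 :=
    (le_div_iff₀ (pow_pos hγ 2)).2 (le_sub_iff_add_le'.2 hroot.le)
  convert abs_lsCountLT_sub_sum_le hL hb hγ 1 X using 3
  · rw [lsCountLT_of_one_le hL hb hγ hroot le_rfl]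
  rw [sum_translates_of_le (f := fun y => (lsCountLT L S γ y (X / (L + S)) : ℝ))
      (fun y hy => by rw [lsCountLT_of_one_le hL hb hγ hroot hy]) hLγ,
    sum_translates_of_le (f := fun y => (lsCountLT L S γ y (X / (L + S) / (L + S)) : ℝ))
      (fun y hy => by rw [lsCountLT_of_one_le hL hb hγ hroot hy]) hSγ,
    nsmul_eq_mul, nsmul_eq_mul]

end CountingFunctions

section EmpiricalDistribution

variable {L S : ℕ} {γ : ℝ}

lemma tendsto_div_lsCount (hL : 0 < L) (hb : 1 < L + S) {u : ℕ → ℝ} {C : ℝ}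
    (hu : ∀ X, |u X| ≤ C) : Tendsto (fun X => u X / lsCount L S X) atTop (𝓝 0) :=
  tendsto_bdd_div_atTop_nhds_zero (.of_forall fun X => (abs_le.1 (hu X)).1)
    (.of_forall fun X => (abs_le.1 (hu X)).2) (tendsto_lsCount_atTop hL hb)

lemma tendsto_lsCount_div_lsCount (hL : 0 < L) (hb : 1 < L + S) (hγ : 0 < γ)
    (hroot : (L : ℝ) * γ + (S : ℝ) * γ ^ 2 = 1) :
    Tendsto (fun X => (lsCount L S (X / (L + S)) : ℝ) / lsCount L S X) atTop (𝓝 γ) := by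
  refine tendsto_root_of_tendsto_mul_add_comp (g := (· / (L + S))) (by exact_mod_cast hL)
    S.cast_nonneg hγ hroot (fun X => ⟨by positivity, ?_⟩)
    (Nat.tendsto_div_const_atTop (by omega)) ?_
  · exact div_le_one_of_le₀ (by exact_mod_cast lsCount_mono L S (Nat.div_le_self _ _))
      (Nat.cast_nonneg _)
  have herror := tendsto_div_lsCount hL hb (abs_lsCount_sub_le hL hb hγ hroot)
  have hlim := herror.const_sub 1
  rw [sub_zero] at hlim
  refine hlim.congr' ?_
  filter_upwards [eventually_ge_atTop (L + S)] with X hX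
  have h₀ : (lsCount L S X : ℝ) ≠ 0 :=
    Nat.cast_ne_zero.2 (lsCount_pos (by omega) (by omega)).ne'
  have h₁ : (lsCount L S (X / (L + S)) : ℝ) ≠ 0 :=
    Nat.cast_ne_zero.2 (lsCount_pos (by omega) (Nat.div_pos hX (by omega))).ne'
  field_simp
  ring

lemma tendsto_lsCount_div_div_lsCount (hL : 0 < L) (hb : 1 < L + S) (hγ : 0 < γ)
    (hroot : (L : ℝ) * γ + (S : ℝ) * γ ^ 2 = 1) :
    Tendsto (fun X => (lsCount L S (X / (L + S) / (L + S)) : ℝ) / lsCount L S X) atTop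
      (𝓝 (γ ^ 2)) := by
  have hratio := tendsto_lsCount_div_lsCount hL hb hγ hroot
  have hmul := (hratio.comp (Nat.tendsto_div_const_atTop (n := L + S) (by omega))).mul hratio
  rw [← sq] at hmul
  refine hmul.congr' ?_
  filter_upwards [eventually_ge_atTop (L + S)] with X hX
  exact div_mul_div_cancel₀
    (Nat.cast_ne_zero.2 (lsCount_pos (by omega) (Nat.div_pos hX (by omega))).ne')

lemma lsCDF_mem_Icc (L S : ℕ) (γ x : ℝ) (X : ℕ) : lsCDF L S γ x X ∈ Set.Icc (0 : ℝ) 1 :=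
  ⟨by unfold lsCDF; positivity, div_le_one_of_le₀
    (by exact_mod_cast lsCountLT_le_lsCount L S γ x X) (Nat.cast_nonneg _)⟩

lemma lsCDF_mul_lsCount (L S : ℕ) (γ x : ℝ) (X : ℕ) :
    lsCDF L S γ x X * lsCount L S X = lsCountLT L S γ x X :=
  div_mul_cancel_of_imp fun h => by
    have := lsCountLT_le_lsCount L S γ x X
    rw [Nat.cast_eq_zero] at h ⊢
    omega

lemma tendsto_lsCDF_sub_sub (hL : 0 < L) (hb : 1 < L + S) (hγ : 0 < γ)
    (hroot : (L : ℝ) * γ + (S : ℝ) * γ ^ 2 = 1) {k l t ρ x C : ℝ} {g : ℕ → ℕ}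
    (hC : ∀ X, |(lsCountLT L S γ x X : ℝ) - (k * lsCount L S (X / (L + S)) +
      (l * lsCount L S (g X) + lsCountLT L S γ t (g X)))| ≤ C)
    (hρ : Tendsto (fun X => (lsCount L S (g X) : ℝ) / lsCount L S X) atTop (𝓝 ρ))
    (hx : x = k * γ + ρ * (l + t)) :
    Tendsto (fun X => (lsCDF L S γ x X - x) - ρ * (lsCDF L S γ t (g X) - t)) atTop (𝓝 0) := by
  have herror := tendsto_div_lsCount hL hb hC
  have hk := ((tendsto_lsCount_div_lsCount hL hb hγ hroot).sub_const γ).const_mul k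
  have hl := (hρ.sub_const ρ).const_mul l
  have hF := bdd_le_mul_tendsto_zero' 1 (f := fun X => lsCDF L S γ t (g X)) (.of_forall fun X =>
    (abs_of_nonneg (lsCDF_mem_Icc L S γ t (g X)).1).trans_le (lsCDF_mem_Icc L S γ t (g X)).2)
    (by simpa using hρ.sub_const ρ)
  have hsum := ((herror.add hk).add hl).add hF
  simp only [sub_self, mul_zero, add_zero] at hsum
  refine hsum.congr fun X => ?_
  rw [← lsCDF_mul_lsCount L S γ t (g X), lsCDF.eq_def L S γ x]
  linear_combination hx

lemma root_lt_one (hb : 1 < L + S) (hroot : (L : ℝ) * γ + (S : ℝ) * γ ^ 2 = 1) : γ < 1 := by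
  by_contra! hγ
  have hLS : (1 : ℝ) < L + S := by exact_mod_cast hb
  have hlin : (L : ℝ) ≤ L * γ := le_mul_of_one_le_right L.cast_nonneg hγ
  have hquad : (S : ℝ) ≤ S * γ ^ 2 := le_mul_of_one_le_right S.cast_nonneg (one_le_pow₀ hγ)
  linarith

lemma exists_tendsto_lsCDF_sub_sub (hL : 0 < L) (hb : 1 < L + S) (hγ : 0 < γ)
    (hroot : (L : ℝ) * γ + (S : ℝ) * γ ^ 2 = 1) {x : ℝ} (hx : x ∈ Set.Icc 0 1) :
    ∃ t ∈ Set.Icc (0 : ℝ) 1, ∃ ρ ∈ Set.Icc 0 γ, ∃ g : ℕ → ℕ, Tendsto g atTop atTop ∧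
      Tendsto (fun X => (lsCDF L S γ x X - x) - ρ * (lsCDF L S γ t (g X) - t)) atTop (𝓝 0) := by
  have hdiv : Tendsto (· / (L + S)) atTop atTop := Nat.tendsto_div_const_atTop (by omega)
  rcases le_or_gt x (L * γ) with hle | hlt
  · obtain ⟨d, hd, t, ht, hdt⟩ := exists_nat_add_of_mem_Icc hL
      ⟨div_nonneg hx.1 hγ.le, (div_le_iff₀ hγ).2 hle⟩
    obtain rfl : x = γ * (d + t) := by rw [← hdt, mul_div_cancel₀ _ hγ.ne']
    have hcount : ∀ X, |(lsCountLT L S γ (γ * (d + t)) X : ℝ) -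
        (0 * lsCount L S (X / (L + S)) + (d * lsCount L S (X / (L + S)) +
          lsCountLT L S γ t (X / (L + S))))| ≤ (L + S) + S * (L + S) := fun X => by
      simpa only [zero_mul, zero_add] using abs_lsCountLT_sub_le_of_lt hL hb hγ hroot hd ht X
    exact ⟨t, ht, γ, ⟨hγ.le, le_rfl⟩, _, hdiv, tendsto_lsCDF_sub_sub hL hb hγ hroot hcount
      (tendsto_lsCount_div_lsCount hL hb hγ hroot) (by ring)⟩
  · have hS : 0 < S := by
      rcases Nat.eq_zero_or_pos S with rfl | hS
      · simp only [Nat.cast_zero, zero_mul, add_zero] at hroot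
        exact absurd hlt (hroot ▸ hx.2.not_gt)
      · exact hS
    have hγ2 : 0 < γ ^ 2 := pow_pos hγ 2
    obtain ⟨e, he, t, ht, het⟩ := exists_nat_add_of_mem_Icc hS
      ⟨div_nonneg (sub_nonneg.2 hlt.le) hγ2.le, (div_le_iff₀ hγ2).2 (by linarith [hx.2])⟩
    obtain rfl : x = L * γ + γ ^ 2 * (e + t) := by
      rw [← het, mul_div_cancel₀ _ hγ2.ne', add_sub_cancel]
    exact ⟨t, ht, γ ^ 2, ⟨hγ2.le, pow_le_of_le_one hγ.le (root_lt_one hb hroot).le two_ne_zero⟩,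
      _, hdiv.comp hdiv,
      tendsto_lsCDF_sub_sub hL hb hγ hroot (abs_lsCountLT_sub_le_add hL hb hγ hroot he ht)
        (tendsto_lsCount_div_div_lsCount hL hb hγ hroot) rfl⟩

lemma tendsto_lsCDF (hL : 0 < L) (hb : 1 < L + S) (hγ : 0 < γ)
    (hroot : (L : ℝ) * γ + (S : ℝ) * γ ^ 2 = 1) {x : ℝ} (hx : x ∈ Set.Icc 0 1) :
    Tendsto (lsCDF L S γ x) atTop (𝓝 x) := by
  have hbound : ∀ (y : Set.Icc (0 : ℝ) 1) (X : ℕ), ‖lsCDF L S γ y X - y‖ ≤ 1 := fun y X =>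
    Real.dist_le_of_mem_Icc_01 (lsCDF_mem_Icc L S γ y X) y.2
  have hlim : Tendsto (fun X => lsCDF L S γ x X - x) atTop (𝓝 0) := by
    refine tendsto_zero_of_norm_le_mul_comp
      (f := fun (y : Set.Icc (0 : ℝ) 1) X => lsCDF L S γ y X - y) hγ.le
      (root_lt_one hb hroot) hbound (fun y => ?_) ⟨x, hx⟩
    obtain ⟨t, ht, ρ, hρ, g, hg, herror⟩ := exists_tendsto_lsCDF_sub_sub hL hb hγ hroot y.2
    refine ⟨⟨t, ht⟩, g, _, hg, by simpa using herror.norm, fun X => ?_⟩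
    calc ‖lsCDF L S γ y X - y‖
        ≤ ‖ρ * (lsCDF L S γ t (g X) - t)‖ +
          ‖(lsCDF L S γ y X - y) - ρ * (lsCDF L S γ t (g X) - t)‖ := norm_le_insert' _ _
      _ ≤ γ * ‖lsCDF L S γ t (g X) - t‖ +
          ‖(lsCDF L S γ y X - y) - ρ * (lsCDF L S γ t (g X) - t)‖ := by
        rw [norm_mul, Real.norm_of_nonneg hρ.1]
        gcongr
        exact hρ.2
  simpa using hlim.add_const x

end EmpiricalDistribution

lemma sum_indicator_lsSeq {L S : ℕ} (hL : 0 < L) (hb : 1 < L + S) (γ x : ℝ) (N : ℕ) :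
    ∑ j ∈ Icc 1 N, Set.indicator (Set.Iio x) (fun _ => (1 : ℝ)) (lsSeq L S γ j) =
      lsCountLT L S γ x (Nat.nth (memNLS L S) N) := by
  classical
  have hrank : lsCountLT L S γ x (Nat.nth (memNLS L S) N) =
      Nat.count (fun i => lsSeq L S γ (i + 1) < x) N :=
    count_and_nth (infinite_memNLS hL hb) (fun n => lsPhi L S γ n < x) N
  rw [hrank]
  clear hrank
  induction N with
  | zero => simp
  | succ N ih =>
    rw [sum_Icc_succ_top (by omega), ih, Nat.count_succ]
    simp [Set.indicator_apply]

lemma lsCDF_nth {L S : ℕ} (hL : 0 < L) (hb : 1 < L + S) (γ x : ℝ) (N : ℕ) :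
    lsCDF L S γ x (Nat.nth (memNLS L S) N) =
      (∑ j ∈ Icc 1 N, Set.indicator (Set.Iio x) (fun _ => (1 : ℝ)) (lsSeq L S γ j)) / N := by
  rw [lsCDF, lsCount_nth hL hb, sum_indicator_lsSeq hL hb]

theorem ls_seq_uniformly_distributed_general (L S : ℕ) (hL : 0 < L) (hb : 1 < L + S) (γ : ℝ)
    (hγ : 0 < γ) (hroot : (L : ℝ) * γ + (S : ℝ) * γ ^ 2 = 1) :
    ∀ a b : ℝ, 0 ≤ a → a < b → b ≤ 1 →
      Tendsto
        (fun N : ℕ => (∑ j ∈ Icc 1 N,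
          Set.indicator (Set.Ico a b) (fun _ => (1 : ℝ)) (lsSeq L S γ j)) / N)
        atTop (𝓝 (b - a)) := by
  intro a b ha hab hb1
  have hnth : Tendsto (Nat.nth (memNLS L S)) atTop atTop :=
    (Nat.nth_strictMono (infinite_memNLS hL hb)).tendsto_atTop
  have hlim := ((tendsto_lsCDF hL hb hγ hroot ⟨ha.trans hab.le, hb1⟩).comp hnth).sub
    ((tendsto_lsCDF hL hb hγ hroot ⟨ha, hab.le.trans hb1⟩).comp hnth)
  refine hlim.congr fun N => ?_
  have hIco : Set.Ico a b = Set.Iio b \ Set.Iio a := Set.Iio_sdiff_Iio.symm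
  simp only [Function.comp_apply, lsCDF_nth hL hb, ← sub_div, ← sum_sub_distrib, hIco,
    Set.indicator_sdiff (Set.Iio_subset_Iio hab.le), Pi.sub_apply]

/-- If `S ≤ L`, the `(L,S)`-sequence of points is uniformly
distributed in `[0,1)`: for all `0 ≤ a < b ≤ 1`,
`(1/N) Σ_{j=1}^N χ_{[a,b)}(ξ^j) → b − a` as `N → ∞`. -/
theorem ls_seq_uniformly_distributed (L S : ℕ) (hL : 0 < L) (hS : 0 < S) (hSL : S ≤ L)
    (γ : ℝ) (hγ0 : 0 < γ) (hγ1 : γ < 1)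
    (hroot : (L : ℝ) * γ + (S : ℝ) * γ ^ 2 = 1) :
    ∀ a b : ℝ, 0 ≤ a → a < b → b ≤ 1 →
      Filter.Tendsto
        (fun N : ℕ => (∑ j ∈ Finset.Icc 1 N,
          Set.indicator (Set.Ico a b) (fun _ => (1 : ℝ)) (lsSeq L S γ j)) / N)
        Filter.atTop (nhds (b - a)) := by
  exact ls_seq_uniformly_distributed_general L S hL (by omega) γ hγ0 hroot
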